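/- Let B : ℝ² → ℝ be smooth and compactly supported, and suppose the total flux Φ_B := (1/(2π)) ∫_{ℝ²} B(x) dx is an integer. Let A : ℝ² → ℝ² be the Poincaré-gauge potential A(x) := (−x_2, x_1) ∫_0^1 B(u x) u du, for s ≥ 0 set A_s(y) := e^{s/2} A(e^{s/2} y), and let λ_B(s) be the infimum over nonzero ψ ∈ C_c^∞(ℝ², ℂ) of ( ∫_{ℝ²} |∇ψ(y) − iA_s(y)ψ(y)|² dy + (1/16) ∫_{ℝ²} |y|² |ψ(y)|² dy ) / ∫_{ℝ²} |ψ|² dy. Then λ_B(s) → 1/2 as s → ∞. -/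

import Mathlib

open MeasureTheory Real Filter

/-- The two-dimensional Poincaré-gauge potential `A(x) := (−x₂, x₁) ∫_0^1 B(ux) u du`. -/
noncomputable def poincareGauge2 (B : EuclideanSpace ℝ (Fin 2) → ℝ)
    (x : EuclideanSpace ℝ (Fin 2)) (j : Fin 2) : ℝ :=
  (![-x 1, x 0] j) * ∫ u in (0:ℝ)..1, B (u • x) * u

/-- The quadratic form `l_s[ψ]` of the operator `(−i∇ − A_s)² + |y|²/16` in the plane,
with the singularly scaled potential `A_s(y) := e^{s/2} A(e^{s/2} y)`. -/
noncomputable def lsForm2 (A : EuclideanSpace ℝ (Fin 2) → Fin 2 → ℝ) (s : ℝ)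
    (ψ : EuclideanSpace ℝ (Fin 2) → ℂ) : ℝ :=
  (∫ y, ∑ j, ‖fderiv ℝ ψ y (EuclideanSpace.single j (1:ℝ))
      - Complex.I * (Real.exp (s/2) * A (Real.exp (s/2) • y) j : ℝ) * ψ y‖ ^ 2)
  + (1/16 : ℝ) * ∫ y, ‖y‖^2 * ‖ψ y‖^2

/-- The lowest eigenvalue `λ_B(s)` of the singularly scaled operator `L_s`,
as the infimum of the Rayleigh quotient. -/
noncomputable def lambdaB2 (A : EuclideanSpace ℝ (Fin 2) → Fin 2 → ℝ) (s : ℝ) : ℝ :=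
  sInf {q : ℝ | ∃ ψ : EuclideanSpace ℝ (Fin 2) → ℂ,
    ContDiff ℝ (⊤ : ℕ∞) ψ ∧ HasCompactSupport ψ ∧ ψ ≠ 0 ∧
    q = lsForm2 A s ψ / ∫ y, ‖ψ y‖^2}

local notation "E2" => EuclideanSpace ℝ (Fin 2)

theorem continuous_poincareGauge2 {B : E2 → ℝ} (hB : Continuous B) (j : Fin 2) :
    Continuous fun x => poincareGauge2 B x j := by
  have h : Continuous fun x : E2 => ∫ u in (0:ℝ)..1, B (u • x) * u :=
    intervalIntegral.continuous_parametric_intervalIntegral_of_continuous' (by fun_prop) _ _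
  unfold poincareGauge2
  fin_cases j
  · exact (by fun_prop : Continuous fun x : E2 => -x 1).mul h
  · exact (by fun_prop : Continuous fun x : E2 => x 0).mul h

theorem inner_I_mul_real_mul_self (a : ℝ) (z : ℂ) :
    inner ℝ z (Complex.I * (a : ℂ) * z) = 0 := by
  simp only [Complex.inner, Complex.mul_re, Complex.conj_re, Complex.conj_im,
    Complex.I_re, Complex.I_im, Complex.ofReal_re, Complex.ofReal_im, Complex.mul_im]
  ring

theorem norm_sq_add_real_mul_covariant (c a : ℝ) (w z : ℂ) :
    ‖w - Complex.I * (a : ℂ) * z + (c : ℂ) * z‖ ^ 2 =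
      ‖w - Complex.I * (a : ℂ) * z‖ ^ 2 + c * (2 * inner ℝ z w) + c ^ 2 * ‖z‖ ^ 2 := by
  rw [norm_add_sq_real, norm_mul, Complex.norm_real, mul_pow, Real.norm_eq_abs, sq_abs,
    ← Complex.real_smul, real_inner_smul_right, real_inner_comm, inner_sub_right,
    inner_I_mul_real_mul_self]
  ring

theorem integral_coord_mul_inner_fderiv {ψ : E2 → ℂ} (hψ : ContDiff ℝ 1 ψ)
    (hc : HasCompactSupport ψ) (j : Fin 2) :
    ∫ y, y j * (2 * inner ℝ (ψ y) (fderiv ℝ ψ y (EuclideanSpace.single j (1:ℝ)))) =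
      - ∫ y, ‖ψ y‖ ^ 2 := by
  have hdiff : ∀ y, DifferentiableAt ℝ ψ y := fun y => hψ.differentiable one_ne_zero y
  have hgrad : Continuous fun y => fderiv ℝ ψ y (EuclideanSpace.single j (1:ℝ)) :=
    (hψ.continuous_fderiv one_ne_zero).clm_apply continuous_const
  have hcont := hψ.continuous
  have hg : ∀ y, HasFDerivAt (fun y => ‖ψ y‖ ^ 2)
      (2 • (innerSL ℝ (ψ y)).comp (fderiv ℝ ψ y)) y := fun y => (hdiff y).hasFDerivAt.norm_sq
  have hgd : ∀ y, fderiv ℝ (fun y => ‖ψ y‖ ^ 2) y (EuclideanSpace.single j (1:ℝ)) =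
      2 * inner ℝ (ψ y) (fderiv ℝ ψ y (EuclideanSpace.single j (1:ℝ))) := fun y => by
    rw [(hg y).fderiv]; simp [mul_add]
  have hf : ∀ y : E2, HasFDerivAt (fun y : E2 => y j)
      (EuclideanSpace.proj j : E2 →L[ℝ] ℝ) y := fun y =>
    (EuclideanSpace.proj j : E2 →L[ℝ] ℝ).hasFDerivAt
  have hfd : ∀ y : E2, fderiv ℝ (fun y : E2 => y j) y (EuclideanSpace.single j (1:ℝ)) = 1 :=
    fun y => by rw [(hf y).fderiv]; simp
  have hsq : HasCompactSupport fun y => ‖ψ y‖ ^ 2 :=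
    hc.comp_left (g := fun z : ℂ => ‖z‖ ^ 2) (by simp)
  have hin : HasCompactSupport fun y =>
      y j * (2 * inner ℝ (ψ y) (fderiv ℝ ψ y (EuclideanSpace.single j (1:ℝ)))) := by
    refine hc.mono fun y hy => ?_
    contrapose! hy
    simp_all
  have key := integral_mul_fderiv_eq_neg_fderiv_mul_of_integrable (μ := (volume : Measure E2))
    (f := fun y : E2 => y j) (g := fun y => ‖ψ y‖ ^ 2) (v := EuclideanSpace.single j (1:ℝ))
    (by simp only [hfd]
        exact Continuous.integrable_of_hasCompactSupport (by fun_prop) (by simpa using hsq))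
    (by simp only [hgd]
        exact Continuous.integrable_of_hasCompactSupport
          (by fun_prop) hin)
    (Continuous.integrable_of_hasCompactSupport (by fun_prop) hsq.mul_left)
    (fun y _ => (hf y).differentiableAt) (fun y _ => (hg y).differentiableAt)
  simpa only [hgd, hfd, one_mul] using key

theorem integrable_of_eq_zero_of_fderiv_eq_zero {ψ : E2 → ℂ} (hc : HasCompactSupport ψ)
    {f : E2 → ℝ} (hf : Continuous f) (h0 : ∀ y, ψ y = 0 → fderiv ℝ ψ y = 0 → f y = 0) :
    Integrable f :=
  hf.integrable_of_hasCompactSupport <| HasCompactSupport.intro hc fun y hy =>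
    h0 y (image_eq_zero_of_notMem_tsupport hy) <| by
      by_contra h
      exact hy (support_fderiv_subset ℝ h)

theorem integral_norm_sq_covariant_add {ψ : E2 → ℂ} (hψ : ContDiff ℝ 1 ψ)
    (hc : HasCompactSupport ψ) {a : E2 → ℝ} (ha : Continuous a) (j : Fin 2) :
    ∫ y, (‖fderiv ℝ ψ y (EuclideanSpace.single j (1:ℝ)) - Complex.I * (a y : ℂ) * ψ y‖ ^ 2
        + 1 / 16 * (y j ^ 2 * ‖ψ y‖ ^ 2)) =
      1 / 4 * (∫ y, ‖ψ y‖ ^ 2) +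
      ∫ y, ‖fderiv ℝ ψ y (EuclideanSpace.single j (1:ℝ)) - Complex.I * (a y : ℂ) * ψ y
        + ((y j / 4 : ℝ) : ℂ) * ψ y‖ ^ 2 := by
  have hgrad : Continuous fun y => fderiv ℝ ψ y (EuclideanSpace.single j (1:ℝ)) :=
    (hψ.continuous_fderiv one_ne_zero).clm_apply continuous_const
  have hcont := hψ.continuous
  have h3 := integral_coord_mul_inner_fderiv hψ hc j
  rw [← sub_eq_iff_eq_add', ← neg_neg (∫ y, ‖ψ y‖ ^ 2), ← h3, mul_neg, sub_neg_eq_add,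
    ← integral_const_mul, ← integral_add]
  · refine integral_congr_ae (ae_of_all _ fun y => ?_)
    simp only [norm_sq_add_real_mul_covariant]
    ring
  · exact integrable_of_eq_zero_of_fderiv_eq_zero hc (by fun_prop) fun y h h' => by simp [h, h']
  · exact integrable_of_eq_zero_of_fderiv_eq_zero hc (by fun_prop) fun y h h' => by simp [h, h']

theorem lsForm2_eq_add_integral {A : E2 → Fin 2 → ℝ} (hA : ∀ j, Continuous fun x => A x j)
    (s : ℝ) {ψ : E2 → ℂ} (hψ : ContDiff ℝ 1 ψ) (hc : HasCompactSupport ψ) :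
    lsForm2 A s ψ = 1 / 2 * (∫ y, ‖ψ y‖ ^ 2) +
      ∑ j, ∫ y, ‖fderiv ℝ ψ y (EuclideanSpace.single j (1:ℝ))
        - Complex.I * (Real.exp (s/2) * A (Real.exp (s/2) • y) j : ℝ) * ψ y
        + ((y j / 4 : ℝ) : ℂ) * ψ y‖ ^ 2 := by
  have hgrad : ∀ j, Continuous fun y => fderiv ℝ ψ y (EuclideanSpace.single j (1:ℝ)) :=
    fun j => (hψ.continuous_fderiv one_ne_zero).clm_apply continuous_const
  have hcont := hψ.continuous
  have hAs : ∀ j, Continuous fun y => Real.exp (s/2) * A (Real.exp (s/2) • y) j := fun j =>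
    continuous_const.mul ((hA j).comp (by fun_prop))
  have hkin : ∀ j, Integrable fun y => ‖fderiv ℝ ψ y (EuclideanSpace.single j (1:ℝ))
      - Complex.I * (Real.exp (s/2) * A (Real.exp (s/2) • y) j : ℝ) * ψ y‖ ^ 2 := fun j =>
    integrable_of_eq_zero_of_fderiv_eq_zero hc (by have := hgrad j; have := hAs j; fun_prop)
      fun y h h' => by simp [h, h']
  have hpot : ∀ j, Integrable fun y : E2 => 1 / 16 * (y j ^ 2 * ‖ψ y‖ ^ 2) := fun j =>
    integrable_of_eq_zero_of_fderiv_eq_zero hc (by fun_prop) fun y h h' => by simp [h]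
  have hsum : lsForm2 A s ψ = ∑ j, ∫ y, (‖fderiv ℝ ψ y (EuclideanSpace.single j (1:ℝ))
      - Complex.I * (Real.exp (s/2) * A (Real.exp (s/2) • y) j : ℝ) * ψ y‖ ^ 2
        + 1 / 16 * (y j ^ 2 * ‖ψ y‖ ^ 2)) := by
    unfold lsForm2
    rw [← integral_const_mul, integral_finsetSum _ fun j _ => hkin j]
    simp only [fun j => integral_add (hkin j) (hpot j)]
    rw [Finset.sum_add_distrib, ← integral_finsetSum _ fun j _ => hpot j]
    congr 2
    ext y
    rw [EuclideanSpace.norm_sq_eq]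
    simp [Fin.sum_univ_two]
    ring
  rw [hsum]
  simp only [fun j => integral_norm_sq_covariant_add hψ hc (hAs j) j]
  rw [Finset.sum_add_distrib]
  simp
  ring

/-- The unit vector of `ℝ²` with polar angle `t`. -/
noncomputable def unitVector (t : ℝ) : E2 := !₂[Real.cos t, Real.sin t]

/-- The flux density of the field `B` along the ray of polar angle `t`. -/
noncomputable def rayFlux (B : E2 → ℝ) (t : ℝ) : ℝ :=
  ∫ r in Set.Ioi (0:ℝ), B (r • unitVector t) * r

theorem norm_unitVector (t : ℝ) : ‖unitVector t‖ = 1 := by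
  simp [unitVector, EuclideanSpace.norm_eq, Fin.sum_univ_two]

theorem contDiff_unitVector : ContDiff ℝ (⊤ : ℕ∞) unitVector := by
  rw [contDiff_euclidean]
  intro i
  fin_cases i
  · exact Real.contDiff_cos
  · exact Real.contDiff_sin

theorem rayFlux_periodic (B : E2 → ℝ) : Function.Periodic (rayFlux B) (2 * π) := fun t => by
  simp [rayFlux, unitVector]

theorem contDiff_rayFlux {B : E2 → ℝ} (hB : ContDiff ℝ (⊤ : ℕ∞) B) (hc : HasCompactSupport B) :
    ContDiff ℝ (⊤ : ℕ∞) (rayFlux B) := by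
  obtain ⟨R, hR⟩ := hc.isCompact.isBounded.subset_closedBall (0 : E2)
  have hconv := contDiffOn_convolution_right_with_param (𝕜 := ℝ) (μ := (volume : Measure ℝ))
    (n := ⊤) (f := (Set.Ioi (0:ℝ)).indicator fun r => r)
    (g := fun (t : ℝ) (r : ℝ) => B ((-r) • unitVector t))
    (ContinuousLinearMap.mul ℝ ℝ) (s := Set.univ) (k := Set.Icc (-R) R)
    isOpen_univ isCompact_Icc
    (fun t r _ hr => by
      by_contra hne
      have := hR (subset_tsupport _ hne)
      rw [mem_closedBall_zero_iff, norm_smul, norm_unitVector, mul_one, norm_neg,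
        Real.norm_eq_abs, abs_le] at this
      exact hr this)
    (continuous_id.locallyIntegrable.indicator measurableSet_Ioi)
    (by
      have := contDiff_unitVector
      exact (hB.comp (contDiff_snd.neg.smul (this.comp contDiff_fst))).contDiffOn)
  rw [Set.univ_prod_univ, contDiffOn_univ] at hconv
  have h := hconv.comp (contDiff_id.prodMk (contDiff_const (c := (0:ℝ))))
  convert h using 1
  ext t
  simp only [Function.comp, convolution, rayFlux, id, zero_sub, neg_neg,
    ContinuousLinearMap.mul_apply']
  rw [← integral_indicator measurableSet_Ioi]
  congr 1
  ext r
  by_cases hr : r ∈ Set.Ioi (0:ℝ) <;> simp [hr, mul_comm]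

theorem intervalIntegral_smul_eq_rayFlux {B : E2 → ℝ} {R : ℝ} (hR : ∀ x, R ≤ ‖x‖ → B x = 0)
    {x : E2} (hx : x ≠ 0) (hRx : R ≤ ‖x‖) {t : ℝ} (ht : x = ‖x‖ • unitVector t) :
    ∫ u in (0:ℝ)..1, B (u • x) * u = rayFlux B t / ‖x‖ ^ 2 := by
  have hpos : 0 < ‖x‖ := norm_pos_iff.mpr hx
  have h1 : ∫ u in (0:ℝ)..1, B (u • x) * u = ∫ u in Set.Ioi (0:ℝ), B (u • x) * u := by
    rw [intervalIntegral.integral_of_le zero_le_one]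
    refine (setIntegral_eq_of_subset_of_forall_sdiff_eq_zero measurableSet_Ioi
      (fun u hu => hu.1) fun u hu => ?_).symm
    have hu1 : 1 < u := by
      by_contra! h
      exact hu.2 ⟨hu.1, h⟩
    rw [hR, zero_mul]
    rw [norm_smul, Real.norm_eq_abs, abs_of_pos (zero_lt_one.trans hu1)]
    nlinarith
  have h2 := integral_comp_mul_left_Ioi (fun r => B (r • unitVector t) * r) 0 hpos
  rw [mul_zero] at h2
  have h3 : ∀ u : ℝ, B ((‖x‖ * u) • unitVector t) * (‖x‖ * u) = ‖x‖ * (B (u • x) * u) :=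
    fun u => by
      have : (‖x‖ * u) • unitVector t = u • x := by
        conv_rhs => rw [ht]
        rw [smul_smul, mul_comm]
      rw [this]; ring
  simp only [h3, integral_const_mul, smul_eq_mul] at h2
  rw [h1, rayFlux]
  field_simp
  field_simp at h2
  linarith

theorem integral_rayFlux {B : E2 → ℝ} (hB : Continuous B) (hc : HasCompactSupport B) :
    ∫ t in (-π)..π, rayFlux B t = ∫ x, B x := by
  have hiso := Complex.orthonormalBasisOneI.measurePreserving_repr
  have hpt : ∀ p : ℝ × ℝ, Complex.orthonormalBasisOneI.repr (Complex.polarCoord.symm p) =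
      p.1 • unitVector p.2 := fun p => by
    ext i
    rw [Complex.orthonormalBasisOneI_repr_apply]
    fin_cases i
    · simp [unitVector, Complex.polarCoord_symm_apply, -Complex.ofReal_cos]
    · simp [unitVector, Complex.polarCoord_symm_apply, -Complex.ofReal_sin]
  have hpolar := Complex.integral_comp_polarCoord_symm
    fun z => B (Complex.orthonormalBasisOneI.repr z)
  rw [← hiso.integral_comp
    Complex.orthonormalBasisOneI.repr.toHomeomorph.measurableEmbedding, ← hpolar,
    intervalIntegral.integral_of_le (by linarith [pi_pos]), integral_Ioc_eq_integral_Ioo]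
  simp only [hpt, rayFlux, smul_eq_mul]
  obtain ⟨R, hR⟩ := hc.isCompact.isBounded.subset_closedBall (0 : E2)
  have hcont : Continuous fun p : ℝ × ℝ => p.1 * B (p.1 • unitVector p.2) := by
    have := contDiff_unitVector.continuous
    fun_prop
  have hon : IntegrableOn (fun p : ℝ × ℝ => p.1 * B (p.1 • unitVector p.2))
      (Set.Ioi 0 ×ˢ Set.Ioo (-π) π) := by
    refine (hcont.continuousOn.integrableOn_compact
      ((isCompact_Icc (a := 0) (b := R)).prod
        (isCompact_Icc (a := -π) (b := π)))).of_forall_sdiff_eq_zero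
      (measurableSet_Ioi.prod measurableSet_Ioo) fun p hp => ?_
    obtain ⟨⟨h1, h2⟩, h3⟩ := hp
    by_contra hne
    have := hR (subset_tsupport _ (right_ne_zero_of_mul hne))
    rw [mem_closedBall_zero_iff, norm_smul, norm_unitVector, mul_one, Real.norm_eq_abs] at this
    exact h3 ⟨⟨le_of_lt h1, (le_abs_self _).trans this⟩, h2.1.le, h2.2.le⟩
  symm
  rw [polarCoord_target, Measure.volume_eq_prod, setIntegral_prod _ hon,
    integral_integral_swap]
  · simp only [mul_comm]
  · rw [Measure.prod_restrict]
    exact hon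

theorem exists_phase {h : ℝ → ℝ} (hh : ContDiff ℝ (⊤ : ℕ∞) h)
    (hper : Function.Periodic h (2 * π)) {n : ℤ}
    (hn : ∫ t in (-π)..π, h t = 2 * π * n) :
    ∃ F : ℝ → ℂ, ContDiff ℝ (⊤ : ℕ∞) F ∧ Function.Periodic F (2 * π) ∧ (∀ t, ‖F t‖ = 1) ∧
      ∀ t, HasDerivAt F (Complex.I * h t * F t) t := by
  have hd : ∀ t, HasDerivAt (fun t => ∫ τ in (0:ℝ)..t, h τ) (h t) t := fun t =>
    intervalIntegral.integral_hasDerivAt_right (hh.continuous.intervalIntegrable _ _)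
      (hh.continuous.stronglyMeasurableAtFilter _ _) hh.continuous.continuousAt
  have hcd : ContDiff ℝ (⊤ : ℕ∞) fun t => ∫ τ in (0:ℝ)..t, h τ := by
    refine contDiff_infty_iff_deriv.2 ⟨fun t => (hd t).differentiableAt, ?_⟩
    rwa [show deriv (fun t => ∫ τ in (0:ℝ)..t, h τ) = h from funext fun t => (hd t).deriv]
  refine ⟨fun t => Complex.exp (((∫ τ in (0:ℝ)..t, h τ : ℝ) : ℂ) * Complex.I), ?_, ?_, ?_, ?_⟩
  · exact Complex.contDiff_exp.comp
      ((Complex.ofRealCLM.contDiff.comp hcd).mul contDiff_const)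
  · intro t
    have h1 : ∫ τ in (0:ℝ)..(t + 2 * π), h τ = (∫ τ in (0:ℝ)..t, h τ) + 2 * π * n := by
      rw [← intervalIntegral.integral_add_adjacent_intervals
        (hh.continuous.intervalIntegrable 0 t) (hh.continuous.intervalIntegrable _ _),
        hper.intervalIntegral_add_eq t (-π), ← hn]
      congr 3
      ring
    simp only [h1]
    rw [Complex.exp_eq_exp_iff_exists_int]
    exact ⟨n, by push_cast; ring⟩
  · intro t
    exact Complex.norm_exp_ofReal_mul_I _
  · intro t
    convert (((hd t).ofReal_comp).mul_const Complex.I).cexp using 1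
    ring

theorem eq_of_arg_neg {α : Type*} {F : ℝ → α} (hF : Function.Periodic F (2 * π)) {z : ℂ}
    (hz : z ≠ 0) : F z.arg = F ((-z).arg + π) := by
  have h := Complex.arg_neg_coe_angle (neg_ne_zero.2 hz)
  rw [neg_neg, ← Real.Angle.coe_add, Real.Angle.angle_eq_iff_two_pi_dvd_sub] at h
  obtain ⟨k, hk⟩ := h
  rw [show z.arg = (-z).arg + π + k * (2 * π) by linarith]
  exact hF.int_mul k _

/-- The planar vector `x` as a complex number. -/
noncomputable def toComplexL : E2 →L[ℝ] ℂ :=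
  (Complex.orthonormalBasisOneI.repr.symm.toContinuousLinearEquiv : E2 →L[ℝ] ℂ)

theorem toComplexL_apply (x : E2) : toComplexL x = x 0 + x 1 * Complex.I :=
  Complex.orthonormalBasisOneI_repr_symm_apply x

theorem norm_toComplexL (x : E2) : ‖toComplexL x‖ = ‖x‖ :=
  Complex.orthonormalBasisOneI.repr.symm.norm_map x

theorem toComplexL_ne_zero {x : E2} (hx : x ≠ 0) : toComplexL x ≠ 0 := by
  rw [← norm_ne_zero_iff, norm_toComplexL]
  exact norm_ne_zero_iff.2 hx

theorem eq_norm_smul_unitVector_arg (x : E2) :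
    x = ‖x‖ • unitVector (toComplexL x).arg := by
  have h1 := Complex.norm_mul_cos_arg (toComplexL x)
  have h2 := Complex.norm_mul_sin_arg (toComplexL x)
  rw [norm_toComplexL, toComplexL_apply] at h1 h2
  ext i
  fin_cases i
  · simpa [unitVector, toComplexL_apply] using h1.symm
  · simpa [unitVector, toComplexL_apply] using h2.symm

theorem contDiffAt_arg {z : ℂ} (hz : z ∈ Complex.slitPlane) :
    ContDiffAt ℝ (⊤ : ℕ∞) Complex.arg z := by
  have h : ContDiffAt ℝ (⊤ : ℕ∞) Complex.log z := ((Complex.contDiffAt_log hz).restrict_scalars ℝ)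
  exact (Complex.imCLM.contDiff.contDiffAt.comp z h).congr_of_eventuallyEq
    (.of_forall fun w => (Complex.log_im w).symm)

theorem hasFDerivAt_arg {z : ℂ} (hz : z ∈ Complex.slitPlane) :
    HasFDerivAt Complex.arg (Complex.imCLM.comp
      (ContinuousLinearMap.mul ℝ ℂ z⁻¹)) z := by
  have h := ((Complex.hasStrictDerivAt_log hz).hasDerivAt.hasFDerivAt.restrictScalars ℝ)
  have h2 := Complex.imCLM.hasFDerivAt.comp z h
  have h3 : Complex.imCLM.comp (ContinuousLinearMap.mul ℝ ℂ z⁻¹) = Complex.imCLM.comp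
      ((ContinuousLinearMap.toSpanSingleton ℂ z⁻¹).restrictScalars ℝ) := by
    refine ContinuousLinearMap.ext fun w => ?_
    simp [mul_comm]
  rw [h3]
  exact h2.congr_of_eventuallyEq (.of_forall fun w => (Complex.log_im w).symm)

/-- A `2π`-periodic function of the polar angle is locally a smooth function of a smooth
determination of the angle, whose differential is `(-x₂, x₁) / |x|²`. -/
theorem exists_local_angle {x : E2} (hx : x ≠ 0) :
    ∃ θ : E2 → ℝ, ∃ θ' : E2 →L[ℝ] ℝ, ContDiffAt ℝ (⊤ : ℕ∞) θ x ∧ HasFDerivAt θ θ' x ∧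
      (∀ j, θ' (EuclideanSpace.single j (1:ℝ)) = ![-x 1, x 0] j / ‖x‖ ^ 2) ∧
      ∀ {α : Type} (F : ℝ → α), Function.Periodic F (2 * π) →
        ∀ y, y ≠ 0 → F (toComplexL y).arg = F (θ y) := by
  have hder : ∀ j, (((toComplexL x)⁻¹ * toComplexL (EuclideanSpace.single j (1:ℝ))).im) =
      ![-x 1, x 0] j / ‖x‖ ^ 2 := fun j => by
    have hn : Complex.normSq (x 0 + x 1 * Complex.I) = ‖x‖ ^ 2 := by
      rw [← toComplexL_apply, Complex.normSq_eq_norm_sq, norm_toComplexL]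
    fin_cases j
    · simp [toComplexL_apply, Complex.inv_im, hn]
    · simp [toComplexL_apply, Complex.inv_re, hn]
  by_cases hs : toComplexL x ∈ Complex.slitPlane
  · refine ⟨fun y => (toComplexL y).arg, _,
      (contDiffAt_arg hs).comp x toComplexL.contDiff.contDiffAt,
      (hasFDerivAt_arg hs).comp x toComplexL.hasFDerivAt, fun j => ?_, fun F _ y _ => rfl⟩
    simpa using hder j
  · have hs' : (-toComplexL) x ∈ Complex.slitPlane := by
      rcases Complex.mem_slitPlane_or_neg_mem_slitPlane (toComplexL_ne_zero hx) with h | h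
      exacts [absurd h hs, h]
    refine ⟨fun y => ((-toComplexL) y).arg + π, _,
      ((contDiffAt_arg hs').comp x (-toComplexL).contDiff.contDiffAt).add contDiffAt_const,
      ((hasFDerivAt_arg hs').comp x (-toComplexL).hasFDerivAt).add_const π, fun j => ?_,
      fun F hF y hy => eq_of_arg_neg hF (toComplexL_ne_zero hy)⟩
    simpa [inv_neg] using hder j

theorem scaled_poincareGauge2_eq {B : E2 → ℝ} {R : ℝ} (hR : ∀ x, R ≤ ‖x‖ → B x = 0)
    {c : ℝ} (hc : 0 < c) {y : E2} (hy : y ≠ 0) (hRy : R ≤ c * ‖y‖) (j : Fin 2) :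
    c * poincareGauge2 B (c • y) j =
      rayFlux B (toComplexL y).arg * (![-y 1, y 0] j / ‖y‖ ^ 2) := by
  have hpos : 0 < ‖y‖ := norm_pos_iff.mpr hy
  have hn : ‖c • y‖ = c * ‖y‖ := by rw [norm_smul, Real.norm_eq_abs, abs_of_pos hc]
  have harg : c • y = ‖c • y‖ • unitVector (toComplexL y).arg := by
    conv_lhs => rw [eq_norm_smul_unitVector_arg y]
    rw [hn, smul_smul]
  have hvec : ![-(c • y) 1, (c • y) 0] j = c * ![-y 1, y 0] j := by
    fin_cases j <;> simp
  rw [poincareGauge2, intervalIntegral_smul_eq_rayFlux hR (smul_ne_zero hc.ne' hy)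
    (hn ▸ hRy) harg, hn, hvec]
  field_simp

/-- The function with phase `F` in the polar angle and profile `w` in the squared radius. -/
noncomputable def polarFunction (F : ℝ → ℂ) (w : ℝ → ℝ) (y : E2) : ℂ :=
  open Classical in if y = 0 then 0 else F (toComplexL y).arg * (w (‖y‖ ^ 2) : ℂ)

section polarFunction

variable {F : ℝ → ℂ} {w : ℝ → ℝ} {δ M : ℝ}

theorem polarFunction_of_ne_zero {y : E2} (hy : y ≠ 0) :
    polarFunction F w y = F (toComplexL y).arg * (w (‖y‖ ^ 2) : ℂ) := if_neg hy

theorem polarFunction_eventuallyEq_zero (hw : ∀ q, 0 < q → q < δ → w q = 0) {y : E2}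
    (hy : ‖y‖ ^ 2 < δ) : polarFunction F w =ᶠ[nhds y] 0 := by
  have hopen : ∀ᶠ x : E2 in nhds y, ‖x‖ ^ 2 < δ :=
    (by fun_prop : Continuous fun x : E2 => ‖x‖ ^ 2).continuousAt.eventually_lt_const hy
  filter_upwards [hopen] with x hx
  by_cases h0 : x = 0
  · simp [polarFunction, h0]
  · have : 0 < ‖x‖ ^ 2 := by positivity
    simp [polarFunction, h0, hw _ this hx]

theorem hasCompactSupport_polarFunction (hw : ∀ q, M < q → w q = 0) :
    HasCompactSupport (polarFunction F w) := by
  refine HasCompactSupport.intro (isCompact_closedBall (0 : E2) (√M)) fun y hy => ?_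
  rw [mem_closedBall_zero_iff, not_le] at hy
  have hM : M < ‖y‖ ^ 2 := by
    rwa [Real.sqrt_lt' ((Real.sqrt_nonneg M).trans_lt hy)] at hy
  unfold polarFunction
  split_ifs <;> simp [hw _ hM]

theorem polarFunction_eventuallyEq {y : E2} (hy : y ≠ 0) {θ : E2 → ℝ}
    (hθ : ∀ x, x ≠ 0 → F (toComplexL x).arg = F (θ x)) :
    polarFunction F w =ᶠ[nhds y] fun x => F (θ x) * (w (‖x‖ ^ 2) : ℂ) := by
  filter_upwards [isOpen_ne.mem_nhds hy] with x hx
  rw [polarFunction_of_ne_zero hx, hθ x hx]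

theorem contDiff_polarFunction (hF : ContDiff ℝ (⊤ : ℕ∞) F) (hper : Function.Periodic F (2 * π))
    (hδ : 0 < δ) (hw0 : ∀ q, 0 < q → q < δ → w q = 0)
    (hw : ∀ q, 0 < q → ContDiffAt ℝ (⊤ : ℕ∞) w q) :
    ContDiff ℝ (⊤ : ℕ∞) (polarFunction F w) := by
  refine contDiff_iff_contDiffAt.2 fun y => ?_
  by_cases hy : y = 0
  · refine (contDiffAt_const (c := (0:ℂ))).congr_of_eventuallyEq
      (polarFunction_eventuallyEq_zero hw0 ?_)
    simpa [hy] using hδ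
  · obtain ⟨θ, θ', hθ, -, -, hFθ⟩ := exists_local_angle hy
    refine ContDiffAt.congr_of_eventuallyEq ?_ (polarFunction_eventuallyEq hy (hFθ F hper))
    exact (hF.contDiffAt.comp y hθ).mul (Complex.ofRealCLM.contDiff.contDiffAt.comp y
      ((hw _ (by positivity)).comp y (contDiff_norm_sq ℝ).contDiffAt))

theorem fderiv_polarFunction {h : ℝ → ℝ} (hper : Function.Periodic F (2 * π))
    (hhper : Function.Periodic h (2 * π))
    (hF : ∀ t, HasDerivAt F (Complex.I * h t * F t) t) {y : E2} (hy : y ≠ 0) {w' : ℝ}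
    (hw : HasDerivAt w w' (‖y‖ ^ 2)) (j : Fin 2) :
    fderiv ℝ (polarFunction F w) y (EuclideanSpace.single j (1:ℝ)) =
      Complex.I * (h (toComplexL y).arg * (![-y 1, y 0] j / ‖y‖ ^ 2) : ℝ) * polarFunction F w y
      + F (toComplexL y).arg * (2 * w' * y j : ℝ) := by
  obtain ⟨θ, θ', -, hθ', hθj, hθ⟩ := exists_local_angle hy
  have h1 := (hF (θ y)).hasFDerivAt.comp y hθ'
  have h2 : HasFDerivAt (fun x : E2 => w (‖x‖ ^ 2)) _ y :=
    hw.hasFDerivAt.comp y (hasStrictFDerivAt_norm_sq y).hasFDerivAt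
  have h3 := Complex.ofRealCLM.hasFDerivAt.comp y h2
  have h4 := (h1.mul h3).congr_of_eventuallyEq (polarFunction_eventuallyEq hy (hθ F hper))
  rw [h4.fderiv, polarFunction_of_ne_zero hy, hθ F hper y hy, hθ h hhper y hy, ← hθj j]
  simp [EuclideanSpace.inner_single_right]
  ring

end polarFunction

/-- A logarithmic cut-off of the Gaussian `exp (-q / 8)`, as a function of `q`. -/
noncomputable def logCutoff (χ : ℝ → ℝ) (N q : ℝ) : ℝ :=
  χ (Real.log q / N) * Real.exp (-q / 8)

theorem hasDerivAt_logCutoff {χ : ℝ → ℝ} (hχ : Differentiable ℝ χ) (N : ℝ) {q : ℝ}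
    (hq : q ≠ 0) : HasDerivAt (logCutoff χ N)
      (deriv χ (Real.log q / N) / (N * q) * Real.exp (-q / 8) - logCutoff χ N q / 8) q := by
  have h1 := (hχ (Real.log q / N)).hasDerivAt.comp q ((Real.hasDerivAt_log hq).div_const N)
  have h2 := ((hasDerivAt_id q).neg.div_const 8).exp
  refine (h1.mul h2).congr_deriv ?_
  simp only [logCutoff, Function.comp_apply, id, Pi.neg_apply]
  field_simp
  ring

theorem contDiffAt_logCutoff {χ : ℝ → ℝ} (hχ : ContDiff ℝ (⊤ : ℕ∞) χ) (N : ℝ) {q : ℝ}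
    (hq : q ≠ 0) : ContDiffAt ℝ (⊤ : ℕ∞) (logCutoff χ N) q :=
  (hχ.contDiffAt.comp q ((Real.contDiffAt_log.2 hq).div_const N)).mul
    ((contDiff_id.neg.div_const 8).exp.contDiffAt)

theorem logCutoff_eq_zero_of_lt {χ : ℝ → ℝ} (hχ : ∀ t, 2 < |t| → χ t = 0) {N : ℝ} (hN : 0 < N)
    {q : ℝ} (hq : 0 < q) (hlt : q < Real.exp (-(2 * N))) : logCutoff χ N q = 0 := by
  rw [logCutoff, hχ, zero_mul]
  rw [← Real.log_lt_iff_lt_exp hq] at hlt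
  refine lt_abs.2 (Or.inr ?_)
  rw [← neg_div, lt_div_iff₀ hN]
  linarith

theorem logCutoff_eq_zero_of_gt {χ : ℝ → ℝ} (hχ : ∀ t, 2 < |t| → χ t = 0) {N : ℝ} (hN : 0 < N)
    {q : ℝ} (hlt : Real.exp (2 * N) < q) : logCutoff χ N q = 0 := by
  rw [logCutoff, hχ, zero_mul]
  rw [← Real.lt_log_iff_exp_lt ((Real.exp_pos _).trans hlt)] at hlt
  rw [lt_abs, lt_div_iff₀ hN]
  exact Or.inl hlt

/-- The majorant of the defect of the trial functions. -/
noncomputable def annulusBound (C N : ℝ) : ℝ → ℝ :=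
  (Set.Icc (Real.exp (-N)) (Real.exp N)).indicator fun r => 4 * C ^ 2 / N ^ 2 * (r ^ 2)⁻¹

theorem mul_annulusBound (C N r : ℝ) :
    r * annulusBound C N r = (Set.Icc (Real.exp (-N)) (Real.exp N)).indicator
      (fun r => 4 * C ^ 2 / N ^ 2 * r⁻¹) r := by
  rw [annulusBound]
  by_cases hr : r ∈ Set.Icc (Real.exp (-N)) (Real.exp N)
  · have hr0 : r ≠ 0 := ((Real.exp_pos _).trans_le hr.1).ne'
    rw [Set.indicator_of_mem hr, Set.indicator_of_mem hr]
    field_simp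
  · rw [Set.indicator_of_notMem hr, Set.indicator_of_notMem hr, mul_zero]

theorem integrableOn_mul_annulusBound (C N : ℝ) :
    IntegrableOn (fun r => r * annulusBound C N r) (Set.Ioi 0) := by
  simp only [mul_annulusBound]
  refine Integrable.integrableOn (IntegrableOn.integrable_indicator ?_ measurableSet_Icc)
  refine ContinuousOn.integrableOn_compact isCompact_Icc fun r hr => ?_
  have hr0 : r ≠ 0 := ((Real.exp_pos _).trans_le hr.1).ne'
  exact ContinuousAt.continuousWithinAt (by fun_prop (disch := exact hr0))

theorem integral_mul_annulusBound (C : ℝ) {N : ℝ} (hN : 0 < N) :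
    ∫ r in Set.Ioi 0, r * annulusBound C N r = 8 * C ^ 2 / N := by
  have hsub : Set.Icc (Real.exp (-N)) (Real.exp N) ⊆ Set.Ioi 0 :=
    fun r hr => (Real.exp_pos _).trans_le hr.1
  simp only [mul_annulusBound]
  rw [setIntegral_indicator measurableSet_Icc, Set.inter_eq_right.2 hsub,
    integral_Icc_eq_integral_Ioc,
    ← intervalIntegral.integral_of_le (Real.exp_le_exp.2 (by linarith)),
    intervalIntegral.integral_const_mul, integral_inv_of_pos (Real.exp_pos _) (Real.exp_pos _),
    ← Real.exp_sub, Real.log_exp]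
  field_simp
  ring

theorem integrable_annulusBound_norm (C N : ℝ) :
    Integrable fun y : E2 => annulusBound C N ‖y‖ := by
  rw [integrable_fun_norm_addHaar]
  simpa using integrableOn_mul_annulusBound C N

theorem integral_annulusBound_norm (C : ℝ) {N : ℝ} (hN : 0 < N) :
    ∫ y : E2, annulusBound C N ‖y‖ =
      2 * (volume.real (Metric.ball (0 : E2) 1) * (8 * C ^ 2 / N)) := by
  rw [integral_fun_norm_addHaar]
  simp [integral_mul_annulusBound C hN]

/-- The covariant derivative of the trial function is the Gaussian one up to the derivative of
the cut-off. -/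
theorem norm_sq_defect_le {B : E2 → ℝ} {R : ℝ} (hR : ∀ x, R ≤ ‖x‖ → B x = 0)
    {F : ℝ → ℂ} (hper : Function.Periodic F (2 * π)) (hF1 : ∀ t, ‖F t‖ = 1)
    (hF : ∀ t, HasDerivAt F (Complex.I * rayFlux B t * F t) t)
    {χ : ℝ → ℝ} (hχ : Differentiable ℝ χ) {C : ℝ} (hC : ∀ t, |deriv χ t| ≤ C)
    (hχ0 : ∀ t, 2 < |t| → χ t = 0) (hχ0' : ∀ t, 2 < |t| → deriv χ t = 0)
    {N : ℝ} (hN : 0 < N) {c : ℝ} (hc : 0 < c) (hRc : R ≤ c * Real.exp (-N))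
    {y : E2} (hy : y ≠ 0) (j : Fin 2) :
    ‖fderiv ℝ (polarFunction F (logCutoff χ N)) y (EuclideanSpace.single j (1:ℝ))
      - Complex.I * (c * poincareGauge2 B (c • y) j : ℝ) * polarFunction F (logCutoff χ N) y
      + ((y j / 4 : ℝ) : ℂ) * polarFunction F (logCutoff χ N) y‖ ^ 2 ≤ annulusBound C N ‖y‖ := by
  have hpos : 0 < ‖y‖ := norm_pos_iff.mpr hy
  have hnonneg : 0 ≤ annulusBound C N ‖y‖ :=
    Set.indicator_nonneg (fun r _ => by positivity) _
  rcases le_or_gt R (c * ‖y‖) with hfar | hnear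
  · rw [scaled_poincareGauge2_eq hR hc hy hfar,
      fderiv_polarFunction hper (rayFlux_periodic B) hF hy
        (hasDerivAt_logCutoff hχ N (by positivity)), polarFunction_of_ne_zero hy]
    set q := ‖y‖ ^ 2 with hq
    have hqpos : 0 < q := by positivity
    set d := deriv χ (Real.log q / N) with hd
    have hval : ∀ z : ℂ, z + F (toComplexL y).arg *
        (2 * (d / (N * q) * Real.exp (-q / 8) - logCutoff χ N q / 8) * y j : ℝ) - z
        + ((y j / 4 : ℝ) : ℂ) * (F (toComplexL y).arg * (logCutoff χ N q : ℂ)) =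
        F (toComplexL y).arg * ((2 * (d / (N * q)) * Real.exp (-q / 8) * y j : ℝ) : ℂ) := by
      intro z
      push_cast
      ring
    rw [hval, norm_mul, hF1, one_mul, Complex.norm_real, Real.norm_eq_abs, sq_abs]
    by_cases hmem : ‖y‖ ∈ Set.Icc (Real.exp (-N)) (Real.exp N)
    · rw [annulusBound, Set.indicator_of_mem hmem, ← hq]
      have hd2 : d ^ 2 ≤ C ^ 2 := sq_le_sq' (by linarith [(abs_le.1 (hC (Real.log q / N))).1])
        (abs_le.1 (hC _)).2
      have hyj : y j ^ 2 ≤ q := by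
        rw [hq, ← sq_abs (y j), ← Real.norm_eq_abs]
        exact pow_le_pow_left₀ (norm_nonneg _) (PiLp.norm_apply_le y j) 2
      have he : Real.exp (-q / 8) ^ 2 ≤ 1 :=
        pow_le_one₀ (Real.exp_nonneg _) (Real.exp_le_one_iff.2 (by linarith))
      calc (2 * (d / (N * q)) * Real.exp (-q / 8) * y j) ^ 2
          = 4 / (N ^ 2 * q ^ 2) * (d ^ 2 * Real.exp (-q / 8) ^ 2 * y j ^ 2) := by
            field_simp
            ring
        _ ≤ 4 / (N ^ 2 * q ^ 2) * (C ^ 2 * 1 * q) := by gcongr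
        _ = 4 * C ^ 2 / N ^ 2 * q⁻¹ := by field_simp
    · have hlog : 2 < |Real.log q / N| := by
        rw [hq, Real.log_pow, lt_abs]
        rw [Set.mem_Icc, not_and_or, not_le, not_le, ← Real.log_lt_iff_lt_exp hpos,
          ← Real.lt_log_iff_exp_lt hpos] at hmem
        rcases hmem with h | h
        · right
          rw [← neg_div, lt_div_iff₀ hN]
          push_cast
          linarith
        · left
          rw [lt_div_iff₀ hN]
          push_cast
          linarith
      rw [hd, hχ0' _ hlog]
      simpa using hnonneg
  · have hsmall : ‖y‖ < Real.exp (-N) := lt_of_mul_lt_mul_left (hnear.trans_le hRc) hc.le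
    have hsq : ‖y‖ ^ 2 < Real.exp (-(2 * N)) := by
      rw [show -(2 * N) = (2 : ℕ) * -N by push_cast; ring, Real.exp_nat_mul]
      exact pow_lt_pow_left₀ hsmall hpos.le two_ne_zero
    have hz := polarFunction_eventuallyEq_zero (F := F)
      (fun q h h' => logCutoff_eq_zero_of_lt hχ0 hN h h') hsq
    rw [hz.fderiv_eq, hz.eq_of_nhds]
    simpa using hnonneg

theorem half_mul_integral_le_lsForm2 {A : E2 → Fin 2 → ℝ} (hA : ∀ j, Continuous fun x => A x j)
    (s : ℝ) {ψ : E2 → ℂ} (hψ : ContDiff ℝ 1 ψ) (hc : HasCompactSupport ψ) :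
    1 / 2 * (∫ y, ‖ψ y‖ ^ 2) ≤ lsForm2 A s ψ := by
  rw [lsForm2_eq_add_integral hA s hψ hc]
  exact le_add_of_nonneg_right
    (Finset.sum_nonneg fun j _ => integral_nonneg fun y => by positivity)

theorem integral_norm_sq_pos {ψ : E2 → ℂ} (hψ : Continuous ψ) (hc : HasCompactSupport ψ)
    (h0 : ψ ≠ 0) : 0 < ∫ y, ‖ψ y‖ ^ 2 := by
  obtain ⟨x, hx⟩ := Function.ne_iff.1 h0
  exact Continuous.integral_pos_of_hasCompactSupport_nonneg_nonzero (by fun_prop)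
    (hc.comp_left (g := fun z : ℂ => ‖z‖ ^ 2) (by simp)) (fun y => by positivity)
    (x := x) (by simpa using hx)

theorem half_le_rayleighQuotient {A : E2 → Fin 2 → ℝ} (hA : ∀ j, Continuous fun x => A x j)
    (s : ℝ) {ψ : E2 → ℂ} (hψ : ContDiff ℝ 1 ψ) (hc : HasCompactSupport ψ) (h0 : ψ ≠ 0) :
    1 / 2 ≤ lsForm2 A s ψ / ∫ y, ‖ψ y‖ ^ 2 := by
  rw [le_div_iff₀ (integral_norm_sq_pos hψ.continuous hc h0)]
  exact half_mul_integral_le_lsForm2 hA s hψ hc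

/-- For every large `N` there is a trial function whose Rayleigh quotient is, for all large `s`,
within `O(1 / N)` of `1 / 2`. -/
theorem exists_trial_function {B : E2 → ℝ} (hB : ContDiff ℝ (⊤ : ℕ∞) B)
    (hBc : HasCompactSupport B) {n : ℤ} (hn : ∫ x, B x = 2 * π * n) :
    ∃ K : ℝ, ∀ N : ℝ, 2 ≤ N → ∃ ψ : E2 → ℂ, ContDiff ℝ (⊤ : ℕ∞) ψ ∧ HasCompactSupport ψ ∧
      ψ ≠ 0 ∧ ∀ᶠ s in atTop,
        lsForm2 (poincareGauge2 B) s ψ / (∫ y, ‖ψ y‖ ^ 2) ≤ 1 / 2 + K / N := by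
  obtain ⟨R, hR⟩ : ∃ R, ∀ x, R ≤ ‖x‖ → B x = 0 := by
    obtain ⟨R, hR⟩ := hBc.isCompact.isBounded.subset_ball (0 : E2)
    refine ⟨R, fun x hx => image_eq_zero_of_notMem_tsupport fun h => ?_⟩
    exact absurd (mem_ball_zero_iff.1 (hR h)) hx.not_gt
  obtain ⟨F, hF, hper, hF1, hF'⟩ := exists_phase (contDiff_rayFlux hB hBc) (rayFlux_periodic B)
    ((integral_rayFlux hB.continuous hBc).trans hn)
  let χ : ContDiffBump (0 : ℝ) := ⟨1, 2, one_pos, one_lt_two⟩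
  have hχ : ContDiff ℝ (⊤ : ℕ∞) χ := χ.contDiff
  have hsupp : ∀ t : ℝ, 2 < |t| → t ∉ tsupport χ := fun t ht => by
    rw [χ.tsupport_eq, mem_closedBall_zero_iff, Real.norm_eq_abs]
    exact ht.not_ge
  have hχ0 : ∀ t : ℝ, 2 < |t| → χ t = 0 := fun t ht =>
    image_eq_zero_of_notMem_tsupport (hsupp t ht)
  have hχ0' : ∀ t : ℝ, 2 < |t| → deriv χ t = 0 := fun t ht => by
    by_contra h
    exact hsupp t ht (support_deriv_subset h)
  obtain ⟨C, hC⟩ := (hχ.continuous_deriv (by simp)).bounded_above_of_compact_support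
    χ.hasCompactSupport.deriv
  obtain ⟨p, hp⟩ : ∃ p : E2, ‖p‖ = 3 / 2 := ⟨EuclideanSpace.single 0 (3 / 2), by simp⟩
  let S : Set E2 := Metric.ball p (1 / 2)
  have hS : ∀ y ∈ S, 1 ≤ ‖y‖ ∧ ‖y‖ ≤ 2 := fun y hy => by
    have h := abs_le.1 ((abs_norm_sub_norm_le y p).trans (mem_ball_iff_norm.1 hy).le)
    constructor <;> linarith
  have hSpos : 0 < volume.real S :=
    ENNReal.toReal_pos (Metric.measure_ball_pos _ _ (by norm_num)).ne' measure_ball_lt_top.ne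
  refine ⟨2 * (2 * (volume.real (Metric.ball (0 : E2) 1) * (8 * C ^ 2))) /
    (Real.exp (-1) * volume.real S), fun N hN => ?_⟩
  have hN0 : 0 < N := by linarith
  let ψ := polarFunction F (logCutoff χ N)
  have hψ : ContDiff ℝ (⊤ : ℕ∞) ψ := contDiff_polarFunction hF hper (Real.exp_pos (-(2 * N)))
    (fun q h h' => logCutoff_eq_zero_of_lt hχ0 hN0 h h')
    (fun q hq => contDiffAt_logCutoff hχ N hq.ne')
  have hψc : HasCompactSupport ψ := hasCompactSupport_polarFunction
    (M := Real.exp (2 * N)) fun q h => logCutoff_eq_zero_of_gt hχ0 hN0 h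
  have hψS : ∀ y ∈ S, Real.exp (-1) ≤ ‖ψ y‖ ^ 2 := fun y hy => by
    obtain ⟨h1, h2⟩ := hS y hy
    have hy0 : y ≠ 0 := norm_pos_iff.1 (by linarith)
    have hlog0 : 0 ≤ Real.log (‖y‖ ^ 2) := Real.log_nonneg (one_le_pow₀ h1)
    have hlog : Real.log (‖y‖ ^ 2) ≤ N := by
      rw [Real.log_pow]
      have := Real.log_le_sub_one_of_pos (x := ‖y‖) (by linarith)
      push_cast
      linarith
    have hχ1 : χ (Real.log (‖y‖ ^ 2) / N) = 1 := by
      refine χ.one_of_mem_closedBall ?_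
      rw [mem_closedBall_zero_iff, Real.norm_eq_abs, abs_of_nonneg (by positivity)]
      exact (div_le_one hN0).2 hlog
    rw [show ψ y = _ from polarFunction_of_ne_zero hy0, norm_mul, hF1, one_mul, Complex.norm_real,
      Real.norm_eq_abs, sq_abs, logCutoff, hχ1, one_mul, ← Real.exp_nat_mul]
    refine Real.exp_le_exp.2 ?_
    push_cast
    nlinarith
  have hmass : Real.exp (-1) * volume.real S ≤ ∫ y, ‖ψ y‖ ^ 2 := by
    have hint : Integrable fun y => ‖ψ y‖ ^ 2 :=
      Continuous.integrable_of_hasCompactSupport (by have := hψ.continuous; fun_prop)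
        (hψc.comp_left (g := fun z : ℂ => ‖z‖ ^ 2) (by simp))
    calc Real.exp (-1) * volume.real S = ∫ _ in S, Real.exp (-1) := by
          rw [setIntegral_const, smul_eq_mul, mul_comm]
      _ ≤ ∫ y in S, ‖ψ y‖ ^ 2 :=
          setIntegral_mono_on (integrableOn_const measure_ball_lt_top.ne) hint.integrableOn
            measurableSet_ball hψS
      _ ≤ ∫ y, ‖ψ y‖ ^ 2 :=
          setIntegral_le_integral hint (ae_of_all _ fun y => by positivity)
  have hlow : 0 < Real.exp (-1) * volume.real S := by positivity
  have hψ0 : ψ ≠ 0 := fun h => by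
    rw [h] at hmass
    simp at hmass
    linarith
  refine ⟨ψ, hψ, hψc, hψ0, ?_⟩
  have hlarge : ∀ᶠ s : ℝ in atTop, R ≤ Real.exp (s / 2) * Real.exp (-N) :=
    ((Real.tendsto_exp_atTop.comp (tendsto_id.atTop_div_const two_pos)).atTop_mul_const
      (Real.exp_pos _)).eventually_ge_atTop R
  filter_upwards [hlarge] with s hs
  have hdefect : ∀ j, ∫ y, ‖fderiv ℝ ψ y (EuclideanSpace.single j (1:ℝ))
        - Complex.I * (Real.exp (s/2) * poincareGauge2 B (Real.exp (s/2) • y) j : ℝ) * ψ y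
        + ((y j / 4 : ℝ) : ℂ) * ψ y‖ ^ 2 ≤
      2 * (volume.real (Metric.ball (0 : E2) 1) * (8 * C ^ 2 / N)) := fun j => by
    rw [← integral_annulusBound_norm C hN0]
    refine integral_mono_of_nonneg (ae_of_all _ fun y => by positivity)
      (integrable_annulusBound_norm C N) ?_
    filter_upwards [Measure.ae_ne volume (0 : E2)] with y hy
    exact norm_sq_defect_le hR hper hF1 hF' (hχ.differentiable (by simp)) hC hχ0 hχ0' hN0
      (Real.exp_pos _) hs hy j
  have hpos : 0 < ∫ y, ‖ψ y‖ ^ 2 := hlow.trans_le hmass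
  rw [lsForm2_eq_add_integral (continuous_poincareGauge2 hB.continuous) s
    (hψ.of_le (by exact_mod_cast le_top)) hψc, div_le_iff₀ hpos, Fin.sum_univ_two]
  have hK : 2 * (2 * (volume.real (Metric.ball (0 : E2) 1) * (8 * C ^ 2))) /
      (Real.exp (-1) * volume.real S) / N * (Real.exp (-1) * volume.real S) =
      2 * (2 * (volume.real (Metric.ball (0 : E2) 1) * (8 * C ^ 2 / N))) := by
    field_simp
  have hmul := mul_le_mul_of_nonneg_left hmass
    (by positivity : 0 ≤ 2 * (2 * (volume.real (Metric.ball (0 : E2) 1) * (8 * C ^ 2))) /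
      (Real.exp (-1) * volume.real S) / N)
  linarith [hdefect 0, hdefect 1]

theorem stmt19 (B : EuclideanSpace ℝ (Fin 2) → ℝ)
    (hBsmooth : ContDiff ℝ (⊤ : ℕ∞) B) (hBsupp : HasCompactSupport B)
    (hflux : ∃ n : ℤ, (1 / (2 * Real.pi)) * (∫ x, B x) = (n : ℝ)) :
    Tendsto (fun s => lambdaB2 (poincareGauge2 B) s) atTop (nhds (1/2 : ℝ)) := by
  obtain ⟨n, hn⟩ := hflux
  have hn' : ∫ x, B x = 2 * π * n := by
    rw [← hn]
    field_simp
  obtain ⟨K, hK⟩ := exists_trial_function hBsmooth hBsupp hn'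
  have hA := continuous_poincareGauge2 hBsmooth.continuous
  have hlower : ∀ s, ∀ q ∈ {q : ℝ | ∃ ψ : E2 → ℂ, ContDiff ℝ (⊤ : ℕ∞) ψ ∧
      HasCompactSupport ψ ∧ ψ ≠ 0 ∧ q = lsForm2 (poincareGauge2 B) s ψ / ∫ y, ‖ψ y‖^2},
      1 / 2 ≤ q := by
    rintro s q ⟨ψ, h1, h2, h3, rfl⟩
    exact half_le_rayleighQuotient hA s (h1.of_le (by exact_mod_cast le_top)) h2 h3
  refine tendsto_order.2 ⟨fun a ha => .of_forall fun s => ha.trans_le ?_, fun a ha => ?_⟩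
  · obtain ⟨ψ, h1, h2, h3, -⟩ := hK 2 le_rfl
    exact le_csInf ⟨_, ψ, h1, h2, h3, rfl⟩ (hlower s)
  · have hlim : Tendsto (fun N : ℝ => 1 / 2 + K / N) atTop (nhds (1 / 2 + 0)) :=
      tendsto_const_nhds.add (tendsto_const_nhds.div_atTop tendsto_id)
    rw [add_zero] at hlim
    obtain ⟨N, hNa, hN⟩ := ((hlim.eventually_lt_const ha).and (eventually_ge_atTop 2)).exists
    obtain ⟨ψ, h1, h2, h3, hs⟩ := hK N hN
    filter_upwards [hs] with s hs
    exact (csInf_le ⟨_, hlower s⟩ ⟨ψ, h1, h2, h3, rfl⟩).trans_lt (hs.trans_lt hNa)
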